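/- arXiv:2401.16941 — 3 statements merged into one kernel-verified Lean document; each statement's English description precedes it below -/
import Mathlib

section
/- Let ν be a nonzero real number and let l, u be integers with l ≥ 1 and u ≥ 1. Then Σ_{i=1}^{u} binom(1−lν, i) · ( Σ_{(j_1,…,j_i)∈T(i,u)} binom(ν^{-1}, j_1)⋯binom(ν^{-1}, j_i) ) = binom(ν^{-1} − l, u). -/
noncomputable section

open scoped Classical

/-- The generalized binomial coefficient `a (a-1) ⋯ (a-k+1) / k!` in a field `K`
(of characteristic zero in all uses). -/
def gbinom {K : Type*} [Field K] (a : K) (k : ℕ) : K :=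
  (∏ i ∈ Finset.range k, (a - (i : K))) / (k.factorial : K)

/-- `Tsum x i l = Σ_{(j₁,…,j_i) ∈ T(i,l)} binom(x,j₁)⋯binom(x,j_i)`, the sum over all
`i`-tuples of positive integers with sum `l` (a finitely supported sum). -/
def Tsum (x : ℝ) (i l : ℕ) : ℝ :=
  ∑ᶠ c : Fin i → ℕ,
    if (∀ t, 1 ≤ c t) ∧ (∑ t, c t) = l then ∏ t, gbinom x (c t) else 0

end

/-!
Since `binom(x, j)` is the coefficient of `X ^ j` in `(1 + X) ^ x`, the inner sum over `T(i, u)` is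
the coefficient of `X ^ u` in `((1 + X) ^ x - 1) ^ i`. For a natural number `a`, expanding
`(1 + X) ^ (a * x) = (1 + ((1 + X) ^ x - 1)) ^ a` by the binomial theorem gives
`∑ i, binom(a, i) * [X ^ u] ((1 + X) ^ x - 1) ^ i = binom(a * x, u)`. Both sides are polynomials in
`a`, so the identity holds for every `a`; the theorem is the case `x = ν⁻¹`, `a = 1 - l * ν`.
-/

open Finset PowerSeries

section PowerSeriesCoefficients

variable {R : Type*}

lemma coeff_prod_eq_sum_piAntidiag [CommSemiring R] {ι : Type*} [DecidableEq ι] (s : Finset ι)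
    (f : ι → R⟦X⟧) (n : ℕ) :
    coeff n (∏ t ∈ s, f t) = ∑ c ∈ piAntidiag s n, ∏ t ∈ s, coeff (c t) (f t) := by
  rw [coeff_prod]
  refine sum_nbij (fun c ↦ ⇑c) (fun c hc ↦ ?_) DFunLike.coe_injective.injOn (fun c hc ↦ ?_)
    fun _ _ ↦ rfl
  · obtain ⟨sum_eq, support_subset⟩ := mem_finsuppAntidiag.1 hc
    exact mem_piAntidiag.2 ⟨sum_eq, fun t ht ↦ support_subset (Finsupp.mem_support_iff.2 ht)⟩
  · obtain ⟨sum_eq, mem_of_ne_zero⟩ := mem_piAntidiag.1 hc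
    exact ⟨Finsupp.onFinset s c mem_of_ne_zero,
      mem_finsuppAntidiag.2 ⟨sum_eq, Finsupp.support_onFinset_subset⟩, rfl⟩

lemma coeff_pow_eq_zero_of_lt [Semiring R] {f : R⟦X⟧} (hf : constantCoeff f = 0) {u i : ℕ}
    (hui : u < i) : coeff u (f ^ i) = 0 :=
  coeff_of_lt_order u <|
    (Nat.cast_lt.2 hui).trans_le (le_order_pow_of_constantCoeff_eq_zero i hf)

lemma coeff_one_add_pow_eq_sum_range [Semiring R] {f : R⟦X⟧} (hf : constantCoeff f = 0)
    (n u : ℕ) :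
    coeff u ((1 + f) ^ n) = ∑ i ∈ range (u + 1), (n.choose i : R) * coeff u (f ^ i) := by
  have coeff_term (i : ℕ) :
      coeff u (f ^ i * 1 ^ (n - i) * (n.choose i : R⟦X⟧)) = n.choose i * coeff u (f ^ i) := by
    rw [one_pow, mul_one, ← Nat.cast_comm, ← nsmul_eq_mul, map_nsmul, nsmul_eq_mul]
  rw [add_comm, (Commute.one_right f).add_pow, map_sum, sum_congr rfl fun i _ ↦ coeff_term i]
  refine sum_congr_of_eq_on_inter (fun i _ hi ↦ ?_) (fun i _ hi ↦ ?_) fun _ _ _ ↦ rfl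
  · rw [coeff_pow_eq_zero_of_lt hf (by simpa using hi), mul_zero]
  · rw [Nat.choose_eq_zero_of_lt (by simpa using hi), Nat.cast_zero, zero_mul]

end PowerSeriesCoefficients

section BinomialSeries

variable {R A : Type*} [CommRing R] [BinomialRing R] [Ring A] [Algebra R A]

lemma binomialSeries_natCast_mul (n : ℕ) (r : R) :
    PowerSeries.binomialSeries A (n * r) = PowerSeries.binomialSeries A r ^ n := by
  induction n with
  | zero => rw [Nat.cast_zero, zero_mul, binomialSeries_zero, pow_zero]
  | succ n ih => rw [Nat.cast_succ, add_one_mul, binomialSeries_add, ih, pow_succ]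

lemma constantCoeff_binomialSeries_sub_one (r : R) :
    constantCoeff (PowerSeries.binomialSeries A r - 1) = 0 := by
  rw [map_sub, binomialSeries_constantCoeff, map_one, sub_self]

lemma choose_natCast_mul_eq_sum_coeff_pow (n : ℕ) (r : R) (u : ℕ) :
    Ring.choose (n * r) u =
      ∑ i ∈ range (u + 1),
        Ring.choose (n : R) i * coeff u ((PowerSeries.binomialSeries R r - 1) ^ i) := by
  calc Ring.choose (n * r) u
      = coeff u (PowerSeries.binomialSeries R (n * r)) := by
        rw [binomialSeries_coeff, smul_eq_mul, mul_one]
    _ = coeff u ((1 + (PowerSeries.binomialSeries R r - 1)) ^ n) := by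
        rw [binomialSeries_natCast_mul, add_sub_cancel]
    _ = _ := by
        simp only [coeff_one_add_pow_eq_sum_range (constantCoeff_binomialSeries_sub_one r),
          Ring.choose_natCast]

end BinomialSeries

lemma polynomial_eq_of_eval_natCast_eq {R : Type*} [CommRing R] [IsDomain R] [CharZero R]
    {p q : Polynomial R}
    (h : ∀ n : ℕ, p.eval (n : R) = q.eval (n : R)) : p = q :=
  p.eq_of_infinite_eval_eq q <|
    (Set.infinite_range_of_injective Nat.cast_injective).mono (Set.range_subset_iff.2 h)

section BinomialCoefficients

variable {K : Type*} [Field K] [CharZero K]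

lemma choose_eq_inv_factorial_mul_eval_descPochhammer (a : K) (k : ℕ) :
    Ring.choose a k = (k.factorial : K)⁻¹ * (descPochhammer K k).eval a := by
  rw [Ring.choose_eq_smul, smul_eq_mul, ← Polynomial.aeval_eq_smeval, Polynomial.aeval_def,
    ← Polynomial.eval_map, descPochhammer_map]

lemma gbinom_eq_choose (a : K) (k : ℕ) : gbinom a k = Ring.choose a k := by
  rw [gbinom, choose_eq_inv_factorial_mul_eval_descPochhammer, descPochhammer_eval_eq_prod_range,
    div_eq_inv_mul]

lemma coeff_binomialSeries_sub_one (x : K) (j : ℕ) :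
    coeff j (PowerSeries.binomialSeries K x - 1) = if 1 ≤ j then gbinom x j else 0 := by
  rcases j.eq_zero_or_pos with rfl | (hj : 1 ≤ j)
  · simp
  · rw [map_sub, binomialSeries_coeff, coeff_one, if_neg (Nat.one_le_iff_ne_zero.1 hj), if_pos hj,
      gbinom_eq_choose, smul_eq_mul, mul_one, sub_zero]

lemma exists_polynomial_eval_eq_choose (k : ℕ) :
    ∃ p : Polynomial K, ∀ a, p.eval a = Ring.choose a k :=
  ⟨.C (k.factorial : K)⁻¹ * descPochhammer K k, fun a ↦ by
    rw [Polynomial.eval_C_mul, choose_eq_inv_factorial_mul_eval_descPochhammer]⟩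

lemma choose_mul_eq_sum_coeff_pow (a x : K) (u : ℕ) :
    Ring.choose (a * x) u =
      ∑ i ∈ range (u + 1),
        Ring.choose a i * coeff u ((PowerSeries.binomialSeries K x - 1) ^ i) := by
  choose p hp using exists_polynomial_eval_eq_choose (K := K)
  have polynomial_identity : (p u).comp (.X * .C x) =
      ∑ i ∈ range (u + 1), p i * .C (coeff u ((PowerSeries.binomialSeries K x - 1) ^ i)) :=
    polynomial_eq_of_eval_natCast_eq fun n ↦ by
      simpa only [Polynomial.eval_comp, Polynomial.eval_finsetSum, Polynomial.eval_mul,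
        Polynomial.eval_X, Polynomial.eval_C, hp] using choose_natCast_mul_eq_sum_coeff_pow n x u
  simpa only [Polynomial.eval_comp, Polynomial.eval_finsetSum, Polynomial.eval_mul,
    Polynomial.eval_X, Polynomial.eval_C, hp] using congrArg (Polynomial.eval a) polynomial_identity

end BinomialCoefficients

lemma Tsum_eq_coeff_pow (x : ℝ) (i u : ℕ) :
    Tsum x i u = coeff u ((PowerSeries.binomialSeries ℝ x - 1) ^ i) := by
  have support_subset : (Function.support fun c : Fin i → ℕ ↦
      if (∀ t, 1 ≤ c t) ∧ ∑ t, c t = u then ∏ t, gbinom x (c t) else 0) ⊆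
        ↑(piAntidiag (univ : Finset (Fin i)) u) := fun c hc ↦ by
    have sum_eq : ∑ t, c t = u := (ite_ne_right_iff.1 hc).1.2
    exact mem_piAntidiag.2 ⟨sum_eq, fun t _ ↦ mem_univ t⟩
  rw [Tsum, finsum_eq_sum_of_support_subset _ support_subset, ← Fin.prod_const,
    coeff_prod_eq_sum_piAntidiag]
  refine sum_congr rfl fun c hc ↦ ?_
  simp only [(mem_piAntidiag.1 hc).1, and_true, coeff_binomialSeries_sub_one, prod_ite_zero,
    mem_univ, forall_const]

theorem binom_Tsum_identity_general (a x : ℝ) (u : ℕ) (hu : 1 ≤ u) :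
    ∑ i ∈ Icc 1 u, gbinom a i * Tsum x i u = gbinom (a * x) u := by
  have Tsum_zero : Tsum x 0 u = 0 := by
    rw [Tsum_eq_coeff_pow, pow_zero, coeff_one, if_neg (Nat.one_le_iff_ne_zero.1 hu)]
  calc ∑ i ∈ Icc 1 u, gbinom a i * Tsum x i u
      = ∑ i ∈ range (u + 1), gbinom a i * Tsum x i u := by
        rw [range_eq_Ico, sum_eq_sum_Ico_succ_bot u.succ_pos, Tsum_zero, mul_zero, zero_add]
        rfl
    _ = gbinom (a * x) u := by
        simp only [gbinom_eq_choose, Tsum_eq_coeff_pow, choose_mul_eq_sum_coeff_pow]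

/-- for a nonzero real `ν` and integers `l, u ≥ 1`:
`Σ_{i=1}^{u} binom(1−lν, i) · (Σ_{(j₁,…,j_i)∈T(i,u)} binom(ν⁻¹,j₁)⋯binom(ν⁻¹,j_i))
  = binom(ν⁻¹ − l, u)`. -/
theorem binom_Tsum_identity (ν : ℝ) (hν : ν ≠ 0) (l u : ℕ) (hl : 1 ≤ l) (hu : 1 ≤ u) :
    ∑ i ∈ Finset.Icc 1 u, gbinom (1 - (l : ℝ) * ν) i * Tsum ν⁻¹ i u =
      gbinom (ν⁻¹ - l) u := by
  rw [binom_Tsum_identity_general _ _ u hu, sub_mul, one_mul, mul_assoc, mul_inv_cancel₀ hν,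
    mul_one]
end

section
/- Let ν be a nonzero real number and let l, u be integers with l ≥ 1 and u ≥ 1. Then Σ_{t=0}^{u} (−1)^{u−t} · binom(1−lν, t) · binom(−lν−t, u−t) · binom(t·ν^{-1}, u) = binom(ν^{-1} − l, u). -/
/-!
As a function of `x`, `gbinom (x * c) u` is a polynomial of degree at most `u`, so it equals its own
Lagrange interpolant at the nodes `0, 1, …, u`. For these nodes, the `t`-th Lagrange basis
polynomial takes the value `(-1) ^ (u - t) * gbinom x t * gbinom (x - 1 - t) (u - t)` at `x`.
The theorem is the case `c = ν⁻¹`, `x = 1 - l * ν`.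
-/

section

open Finset Polynomial

theorem prod_range_erase {M : Type*} [CommMonoid M] (f : ℕ → M) (t d : ℕ) :
    ∏ j ∈ (range (t + d + 1)).erase t, f j =
      (∏ j ∈ range t, f j) * ∏ i ∈ range d, f (t + 1 + i) := by
  induction d with
  | zero => simp [range_add_one]
  | succ d ih =>
    have erase_range_succ : (range (t + (d + 1) + 1)).erase t =
        insert (t + 1 + d) ((range (t + d + 1)).erase t) := by
      grind
    rw [erase_range_succ, prod_insert (by simp), ih, prod_range_succ, mul_left_comm, mul_comm (f _)]

theorem prod_range_natCast_sub_eq_factorial {R : Type*} [CommRing R] (n : ℕ) :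
    ∏ j ∈ range n, ((n : R) - j) = n.factorial := by
  rw [← descPochhammer_eval_eq_prod_range, descPochhammer_eval_eq_descFactorial,
    Nat.descFactorial_self]

theorem prod_range_neg_add_one_eq_factorial {R : Type*} [CommRing R] (n : ℕ) :
    ∏ i ∈ range n, (-((i : R) + 1)) = (-1) ^ n * n.factorial := by
  rw [prod_neg, card_range, ← prod_range_add_one_eq_factorial]
  push_cast
  rfl

variable {K : Type*} [Field K]

theorem eval_lagrange_basis_eq_prod_div {ι : Type*} [DecidableEq ι] (s : Finset ι) (v : ι → K)
    (i : ι) (x : K) :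
    (Lagrange.basis s v i).eval x =
      (∏ j ∈ s.erase i, (x - v j)) / ∏ j ∈ s.erase i, (v i - v j) := by
  simp [Lagrange.basis, Lagrange.basisDivisor, eval_prod, prod_mul_distrib, div_eq_inv_mul]

theorem eval_lagrange_basis_range_eq_gbinom_mul_gbinom (t d : ℕ) (x : K) :
    (Lagrange.basis (range (t + d + 1)) (fun n : ℕ => (n : K)) t).eval x =
      (-1) ^ d * gbinom x t * gbinom (x - 1 - t) d := by
  have numerator : ∏ i ∈ range d, (x - ((t + 1 + i : ℕ) : K)) =
      ∏ i ∈ range d, (x - 1 - t - i) :=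
    prod_congr rfl fun i _ => by push_cast; ring
  have denominator : ∏ i ∈ range d, ((t : K) - ((t + 1 + i : ℕ) : K)) =
      (-1) ^ d * d.factorial := by
    rw [← prod_range_neg_add_one_eq_factorial]
    exact prod_congr rfl fun i _ => by push_cast; ring
  rw [eval_lagrange_basis_eq_prod_div, prod_range_erase, prod_range_erase, numerator, denominator,
    prod_range_natCast_sub_eq_factorial, gbinom, gbinom, div_eq_mul_inv, mul_inv, mul_inv,
    ← inv_pow, inv_neg_one]
  ring

theorem eval_eq_sum_gbinom_mul_eval_natCast [CharZero K] {P : K[X]} {u : ℕ}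
    (hP : P.degree ≤ u) (x : K) :
    P.eval x = ∑ t ∈ range (u + 1),
      (-1) ^ (u - t) * gbinom x t * gbinom (x - 1 - t) (u - t) * P.eval (t : K) := by
  have degree_lt : P.degree < #(range (u + 1)) := by
    rw [card_range]
    exact hP.trans_lt (by exact_mod_cast u.lt_succ_self)
  conv_lhs => rw [Lagrange.eq_interpolate Nat.cast_injective.injOn degree_lt]
  rw [Lagrange.interpolate_apply, eval_finsetSum]
  refine sum_congr rfl fun t ht => ?_
  obtain ⟨d, rfl⟩ := Nat.exists_eq_add_of_le (mem_range_succ_iff.mp ht)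
  rw [eval_mul, eval_C, eval_lagrange_basis_range_eq_gbinom_mul_gbinom, Nat.add_sub_cancel_left,
    mul_comm]

theorem exists_degree_le_forall_eval_eq_gbinom_mul (c : K) (k : ℕ) :
    ∃ P : K[X], P.degree ≤ k ∧ ∀ x, P.eval x = gbinom (x * c) k := by
  refine ⟨C (k.factorial : K)⁻¹ * (descPochhammer K k).comp (C c * X), ?_, fun x => ?_⟩
  · refine degree_le_of_natDegree_le ((natDegree_C_mul_le _ _).trans ?_)
    calc ((descPochhammer K k).comp (C c * X)).natDegree
        ≤ (descPochhammer K k).natDegree * (C c * X).natDegree := natDegree_comp_le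
      _ ≤ k * 1 := by
        rw [descPochhammer_natDegree]
        exact Nat.mul_le_mul_left k ((natDegree_C_mul_le c X).trans natDegree_X_le)
      _ = k := mul_one k
  · simp [gbinom, descPochhammer_eval_eq_prod_range, mul_comm c, div_eq_inv_mul]

theorem binom_alternating_identity_general [CharZero K] (x c : K) (u : ℕ) :
    ∑ t ∈ range (u + 1),
        (-1) ^ (u - t) * gbinom x t * gbinom (x - 1 - t) (u - t) * gbinom (t * c) u =
      gbinom (x * c) u := by
  obtain ⟨P, degree_le, eval_eq⟩ := exists_degree_le_forall_eval_eq_gbinom_mul c u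
  simpa only [eval_eq] using (eval_eq_sum_gbinom_mul_eval_natCast degree_le x).symm

end

/-- for a nonzero real `ν` and integers `l, u ≥ 1`:
`Σ_{t=0}^{u} (−1)^{u−t} binom(1−lν,t) binom(−lν−t,u−t) binom(tν⁻¹,u) = binom(ν⁻¹−l, u)`. -/
theorem binom_alternating_identity (ν : ℝ) (hν : ν ≠ 0) (l u : ℕ) (hl : 1 ≤ l) (hu : 1 ≤ u) :
    ∑ t ∈ Finset.range (u + 1),
        (-1 : ℝ) ^ (u - t) * gbinom (1 - (l : ℝ) * ν) t *
          gbinom (-((l : ℝ) * ν) - t) (u - t) * gbinom ((t : ℝ) * ν⁻¹) u =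
      gbinom (ν⁻¹ - l) u := by
  have argument_eq : (1 - (l : ℝ) * ν) * ν⁻¹ = ν⁻¹ - l := by field_simp
  simpa [argument_eq] using binom_alternating_identity_general (1 - (l : ℝ) * ν) ν⁻¹ u
end

section
/- Let m, n, J be real numbers and k, t natural numbers. Then Σ_{q=0}^{t} ( Σ_{i=0}^{t−q} binom(m, k+i) · C(k+i, k) · binom(J, t−q−i) ) · binom(n, q) = binom(m, k) · binom(m+n−k+J, t), where C(k+i,k) is the ordinary binomial coefficient. -/
section BinomialRing

variable {R : Type*} [CommRing R] [BinomialRing R]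

theorem sum_range_ringChoose_mul_ringChoose (r s : R) (t : ℕ) :
    ∑ i ∈ Finset.range (t + 1), Ring.choose r i * Ring.choose s (t - i) =
      Ring.choose (r + s) t := by
  rw [Ring.add_choose_eq t (Commute.all r s), Finset.Nat.sum_antidiagonal_eq_sum_range_succ_mk]

theorem ringChoose_add_mul_natChoose (r : R) (k i : ℕ) :
    Ring.choose r (k + i) * ((k + i).choose k : R) = Ring.choose r k * Ring.choose (r - k) i := by
  simpa only [nsmul_eq_mul', Nat.add_sub_cancel_left] using
    Ring.choose_smul_choose r (Nat.le_add_right k i)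

theorem sum_range_ringChoose_add_mul_natChoose_mul_ringChoose (r s : R) (k t : ℕ) :
    ∑ i ∈ Finset.range (t + 1),
        Ring.choose r (k + i) * ((k + i).choose k : R) * Ring.choose s (t - i) =
      Ring.choose r k * Ring.choose (r - k + s) t := by
  simp only [ringChoose_add_mul_natChoose, mul_assoc, ← Finset.mul_sum,
    sum_range_ringChoose_mul_ringChoose]

theorem vandermonde_type_identity_general (m n J : R) (k t : ℕ) :
    ∑ q ∈ Finset.range (t + 1),
        (∑ i ∈ Finset.range (t - q + 1),
          Ring.choose m (k + i) * ((k + i).choose k : R) * Ring.choose J (t - q - i)) *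
            Ring.choose n q =
      Ring.choose m k * Ring.choose (m + n - (k : R) + J) t := by
  calc
    _ = ∑ q ∈ Finset.range (t + 1),
          Ring.choose m k * (Ring.choose n q * Ring.choose (m - k + J) (t - q)) := by
      refine Finset.sum_congr rfl fun q _ => ?_
      rw [sum_range_ringChoose_add_mul_natChoose_mul_ringChoose, mul_right_comm, mul_assoc]
    _ = Ring.choose m k * Ring.choose (n + (m - k + J)) t := by
      rw [← Finset.mul_sum, sum_range_ringChoose_mul_ringChoose]
    _ = Ring.choose m k * Ring.choose (m + n - k + J) t := by
      congr 2
      ring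

end BinomialRing

theorem gbinom_eq_ringChoose {K : Type*} [Field K] [CharZero K] (a : K) (k : ℕ) :
    gbinom a k = Ring.choose a k := by
  rw [Ring.choose_eq_smul, gbinom, ← descPochhammer_eval_eq_prod_range,
    Polynomial.descPochhammer_smeval_eq_ascPochhammer, Polynomial.ascPochhammer_smeval_eq_eval,
    descPochhammer_eval_eq_ascPochhammer, smul_eq_mul, div_eq_inv_mul]

/-- for reals `m`, `n`, `J` and naturals `k`, `t`:
`Σ_{q=0}^{t} (Σ_{i=0}^{t−q} binom(m,k+i) C(k+i,k) binom(J,t−q−i)) binom(n,q)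
  = binom(m,k) binom(m+n−k+J, t)`. -/
theorem vandermonde_type_identity (m n J : ℝ) (k t : ℕ) :
    ∑ q ∈ Finset.range (t + 1),
        (∑ i ∈ Finset.range (t - q + 1),
          gbinom m (k + i) * ((k + i).choose k : ℝ) * gbinom J (t - q - i)) * gbinom n q =
      gbinom m k * gbinom (m + n - (k : ℝ) + J) t := by
  simpa only [gbinom_eq_ringChoose] using vandermonde_type_identity_general m n J k t
end
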